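/- Fix k ∈ {1,…,L}, let Γ_k be a top-k classifier with respect to p, and set ε_k = error(Γ_k) (that is, ε_k = P(Y ∉ Top(X, k))). If ε̄ < ε_k, then the joint constraint set is empty: there exists no set-valued classifier Γ satisfying both error(Γ) ≤ ε̄ and |Γ(x)| ≤ k for μ-almost every x. -/

import Mathlib

open MeasureTheory Finset

/-
A top set `A` beats every set `B` with at most as many elements: after cancelling `A ∩ B`, each
element of `A \ B` weighs at least as much as each element of `B \ A`, and `A \ B` has at least as
many elements. Hence top-`k` sets minimise the conditional error pointwise, and integrating shows
that no classifier of size at most `k` has a smaller error rate.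
-/

section TopSets

variable {ι M : Type*}

/-- `A` consists of labels of largest weight under `q`: no label outside `A` outweighs one in `A`.
The size of `A` is left free and ties at the boundary may be broken either way. -/
def IsTopSet [LE M] (q : ι → M) (A : Finset ι) : Prop :=
  ∀ ℓ ∈ A, ∀ m ∉ A, q m ≤ q ℓ

theorem IsTopSet.sum_le_sum_of_card_le [AddCommMonoid M] [LinearOrder M]
    [IsOrderedCancelAddMonoid M] {q : ι → M} {A B : Finset ι} (hA : IsTopSet q A)
    (hq : ∀ ℓ, 0 ≤ q ℓ) (hcard : #B ≤ #A) :
    ∑ ℓ ∈ B, q ℓ ≤ ∑ ℓ ∈ A, q ℓ := by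
  classical
  rw [← sum_sdiff_le_sum_sdiff]
  obtain hempty | hnonempty := (B \ A).eq_empty_or_nonempty
  · rw [hempty, sum_empty]
    exact sum_nonneg fun ℓ _ => hq ℓ
  · obtain ⟨m, hm, hmax⟩ := exists_max_image (B \ A) q hnonempty
    calc ∑ ℓ ∈ B \ A, q ℓ
      _ ≤ #(B \ A) • q m := sum_le_card_nsmul _ _ _ hmax
      _ ≤ #(A \ B) • q m :=
        nsmul_le_nsmul_left (hq m) (card_sdiff_le_card_sdiff_iff.mpr hcard)
      _ ≤ ∑ ℓ ∈ A \ B, q ℓ :=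
        card_nsmul_le_sum _ _ _ fun ℓ hℓ =>
          hA ℓ (mem_sdiff.mp hℓ).1 m (mem_sdiff.mp hm).2

end TopSets

theorem measurable_sum_of_measurable_finset {𝒳 ι M : Type*} [MeasurableSpace 𝒳] [Countable ι]
    [AddCommMonoid M] [MeasurableSpace M] [MeasurableAdd₂ M] {f : 𝒳 → ι → M}
    (hf : ∀ ℓ, Measurable fun x => f x ℓ) {Γ : 𝒳 → Finset ι} (hΓ : Measurable[_, ⊤] Γ) :
    Measurable fun x => ∑ ℓ ∈ Γ x, f x ℓ := by
  let _ : MeasurableSpace (Finset ι) := ⊤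
  have hsum : Measurable fun y : 𝒳 × Finset ι => ∑ ℓ ∈ y.2, f y.1 ℓ :=
    measurable_from_prod_countable_left fun S => S.measurable_fun_sum fun ℓ _ => hf ℓ
  exact hsum.comp (measurable_id.prodMk hΓ)

section ErrorRate

variable {𝒳 ι : Type*} [MeasurableSpace 𝒳] {μ : Measure 𝒳} {p : 𝒳 → ι → ℝ}

/-- The error rate `P(Y ∉ Γ(X))` of a set-valued classifier `Γ`, written in terms of the law `μ` of
the features `X` and the conditional class probabilities `p x ℓ = P(Y = ℓ | X = x)`. -/
noncomputable def errorRate (μ : Measure 𝒳) (p : 𝒳 → ι → ℝ) (Γ : 𝒳 → Finset ι) : ℝ :=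
  ∫ x, (1 - ∑ ℓ ∈ Γ x, p x ℓ) ∂μ

variable [IsFiniteMeasure μ] [Countable ι]

theorem integrable_one_sub_sum (hp : ∀ ℓ, Measurable fun x => p x ℓ) (hp0 : ∀ x ℓ, 0 ≤ p x ℓ)
    (hp1 : ∀ x (S : Finset ι), ∑ ℓ ∈ S, p x ℓ ≤ 1) {Γ : 𝒳 → Finset ι}
    (hΓ : Measurable[_, ⊤] Γ) : Integrable (fun x => 1 - ∑ ℓ ∈ Γ x, p x ℓ) μ :=
  .of_mem_Icc 0 1 (measurable_const.sub (measurable_sum_of_measurable_finset hp hΓ)).aemeasurable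
    (.of_forall fun x =>
      ⟨sub_nonneg.mpr (hp1 x (Γ x)), sub_le_self _ (sum_nonneg fun ℓ _ => hp0 x ℓ)⟩)

theorem errorRate_le_of_isTopSet_of_card_le (hp : ∀ ℓ, Measurable fun x => p x ℓ)
    (hp0 : ∀ x ℓ, 0 ≤ p x ℓ) (hp1 : ∀ x (S : Finset ι), ∑ ℓ ∈ S, p x ℓ ≤ 1)
    {Γtop Γ : 𝒳 → Finset ι} (hΓtop : Measurable[_, ⊤] Γtop) (htop : ∀ x, IsTopSet (p x) (Γtop x))
    (hΓ : Measurable[_, ⊤] Γ) (hcard : ∀ᵐ x ∂μ, #(Γ x) ≤ #(Γtop x)) :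
    errorRate μ p Γtop ≤ errorRate μ p Γ := by
  refine integral_mono_ae (integrable_one_sub_sum hp hp0 hp1 hΓtop)
    (integrable_one_sub_sum hp hp0 hp1 hΓ) ?_
  filter_upwards [hcard] with x hx
  exact sub_le_sub_left ((htop x).sum_le_sum_of_card_le (hp0 x) hx) 1

theorem empty_feasible_set_error_and_size_general (hp : ∀ ℓ, Measurable fun x => p x ℓ)
    (hp0 : ∀ x ℓ, 0 ≤ p x ℓ) (hp1 : ∀ x (S : Finset ι), ∑ ℓ ∈ S, p x ℓ ≤ 1)
    {Γtop : 𝒳 → Finset ι} (hΓtop : Measurable[_, ⊤] Γtop) (htop : ∀ x, IsTopSet (p x) (Γtop x))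
    {εbar : ℝ} (hεbar : εbar < errorRate μ p Γtop) :
    ¬ ∃ Γ : 𝒳 → Finset ι,
        Measurable[_, ⊤] Γ ∧ errorRate μ p Γ ≤ εbar ∧ ∀ᵐ x ∂μ, #(Γ x) ≤ #(Γtop x) :=
  fun ⟨_, hΓ, herr, hcard⟩ =>
    ((errorRate_le_of_isTopSet_of_card_le hp hp0 hp1 hΓtop htop hΓ hcard).trans herr).not_gt hεbar

end ErrorRate

/-- if ε̄ is strictly smaller than the error rate ε_k of a top-k
classifier, then there is no set-valued classifier satisfying both the average
error constraint ε̄ and the point-wise size constraint k (μ-a.e.). -/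
theorem empty_feasible_set_error_and_size
    {𝒳 : Type*} [m𝒳 : MeasurableSpace 𝒳] (μ : Measure 𝒳) [IsProbabilityMeasure μ]
    (L : ℕ) (hL : 1 ≤ L)
    (p : 𝒳 → Fin L → ℝ) (hp : Measurable p)
    (hp0 : ∀ x ℓ, 0 ≤ p x ℓ) (hpsum : ∀ x, ∑ ℓ, p x ℓ = 1)
    (k : ℕ) (hk1 : 1 ≤ k) (hkL : k ≤ L)
    (Γk : 𝒳 → Finset (Fin L))
    (hΓkMeas : @Measurable 𝒳 (Finset (Fin L)) m𝒳 ⊤ Γk)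
    (hΓkCard : ∀ x, (Γk x).card = k)
    (hΓkTop : ∀ x, ∀ ℓ ∈ Γk x, ∀ m, m ∉ Γk x → p x m ≤ p x ℓ)
    (εk : ℝ) (hεk : εk = ∫ x, (1 - ∑ ℓ ∈ Γk x, p x ℓ) ∂μ)
    (εbar : ℝ) (hεbar : εbar < εk) :
    ¬ ∃ Γ : 𝒳 → Finset (Fin L),
        @Measurable 𝒳 (Finset (Fin L)) m𝒳 ⊤ Γ ∧
        (∫ x, (1 - ∑ ℓ ∈ Γ x, p x ℓ) ∂μ) ≤ εbar ∧
        (∀ᵐ x ∂μ, (Γ x).card ≤ k) := by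
  simpa only [errorRate, hΓkCard] using
    empty_feasible_set_error_and_size_general (fun ℓ => hp.eval) hp0
      (fun x _ => (sum_le_univ_sum_of_nonneg (hp0 x)).trans_eq (hpsum x)) hΓkMeas hΓkTop
      (hεbar.trans_eq hεk)
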